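/- Let n > 3k − 3, 0 ≤ h ≤ 2n, and let H be a blue cycle of length n + h. Then r̃_H(C_k, C_n) ≤ 3k + 10. -/

import Mathlib

open SimpleGraph

/-- A board state: the set of red edges and the set of blue edges. -/
abbrev Board : Type := Set (Sym2 ℕ) × Set (Sym2 ℕ)

/-- The set of already colored edges of a board. -/
def Board.colored (B : Board) : Set (Sym2 ℕ) := B.1 ∪ B.2

/-- A Builder strategy selects an edge given the current board. -/
abbrev BuilderStrat : Type := Board → Sym2 ℕ

/-- A Painter strategy colors the selected edge (true = red, false = blue). -/
abbrev PainterStrat : Type := Board → Sym2 ℕ → Bool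

/-- The board after `t` rounds of play from `init`. -/
def playGame (b : BuilderStrat) (p : PainterStrat) (init : Board) : ℕ → Board
  | 0 => init
  | t + 1 =>
      let B := playGame b p init t
      let e := b B
      if p B e then (insert e B.1, B.2) else (B.1, insert e B.2)

/-- Builder's strategy is valid from `init`: along any play it always selects a
previously unselected non-loop edge. -/
def ValidFrom (b : BuilderStrat) (init : Board) : Prop :=
  ∀ p : PainterStrat, ∀ t : ℕ,
    ¬ (b (playGame b p init t)).IsDiag ∧
      b (playGame b p init t) ∉ (playGame b p init t).colored

/-- Builder can force the winning condition `W` within `t` rounds, starting from `init`. -/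
def BuilderWinsIn (init : Board) (W : Board → Prop) (t : ℕ) : Prop :=
  ∃ b : BuilderStrat, ValidFrom b init ∧
    ∀ p : PainterStrat, ∃ s, s ≤ t ∧ W (playGame b p init s)

/-- `G` contains a copy of `H`. -/
def HasCopy {α β : Type} (H : SimpleGraph α) (G : SimpleGraph β) : Prop :=
  ∃ f : α ↪ β, ∀ x y, H.Adj x y → G.Adj (f x) (f y)

/-- The red part of the board contains a copy of `H`. -/
def RedCopy {α : Type} (H : SimpleGraph α) (B : Board) : Prop :=
  HasCopy H (fromEdgeSet B.1)

/-- The blue part of the board contains a copy of `H`. -/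
def BlueCopy {α : Type} (H : SimpleGraph α) (B : Board) : Prop :=
  HasCopy H (fromEdgeSet B.2)

/-- The empty board. -/
def emptyBoard : Board := (∅, ∅)

/-- Winning condition: a red `C_k` or a blue `C_n`. -/
def WinCC (k n : ℕ) (B : Board) : Prop :=
  RedCopy (cycleGraph k) B ∨ BlueCopy (cycleGraph n) B

/-- Winning condition: a red `C_k` or a blue path on `n` vertices. -/
def WinCP (k n : ℕ) (B : Board) : Prop :=
  RedCopy (cycleGraph k) B ∨ BlueCopy (pathGraph n) B

/-- A board consisting of a single blue cycle on the vertices `0, …, m-1`. -/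
def blueCycleBoard (m : ℕ) : Board :=
  (∅, {e | ∃ i : ℕ, i < m ∧ e = s(i, (i + 1) % m)})

/-- A board consisting of a single blue path on the vertices `0, …, m-1`. -/
def bluePathBoard (m : ℕ) : Board :=
  (∅, {e | ∃ i : ℕ, i + 1 < m ∧ e = s(i, i + 1)})


/-- `Forces W t B` : from the board `B`, Builder can force `W` within `t` rounds; edges that are
already colored may be selected again (which never helps Builder). -/
inductive Forces (W : Board → Prop) : ℕ → Board → Prop
  | done {t : ℕ} {B : Board} : W B → Forces W t B
  | play {t : ℕ} {B : Board} (e : Sym2 ℕ) : ¬ e.IsDiag →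
      Forces W t (insert e B.1, B.2) → Forces W t (B.1, insert e B.2) → Forces W (t + 1) B

theorem Forces.mono_rounds {W : Board → Prop} {t t' : ℕ} {B : Board} (hF : Forces W t B)
    (ht : t ≤ t') : Forces W t' B := by
  induction hF generalizing t' with
  | done hW => exact .done hW
  | play e he _ _ ih₁ ih₂ =>
    obtain ⟨u, rfl⟩ : ∃ u, t' = u + 1 := ⟨t' - 1, by omega⟩
    exact .play e he (ih₁ (by omega)) (ih₂ (by omega))

theorem Forces.mono {W : Board → Prop}
    (hW : ∀ B B' : Board, B.1 ⊆ B'.1 → B.2 ⊆ B'.2 → W B → W B')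
    {t t' : ℕ} {B B' : Board} (hF : Forces W t B)
    (h₁ : B.1 ⊆ B'.1) (h₂ : B.2 ⊆ B'.2) (ht : t ≤ t') : Forces W t' B' := by
  refine Forces.mono_rounds ?_ ht
  clear ht
  induction hF generalizing B' with
  | done h => exact .done (hW _ _ h₁ h₂ h)
  | play e he _ _ ih₁ ih₂ =>
    exact .play e he (ih₁ (Set.insert_subset_insert h₁) h₂)
      (ih₂ h₁ (Set.insert_subset_insert h₂))

theorem Forces.exists_fresh {W : Board → Prop} {t : ℕ} {B : Board} (hF : Forces W t B)
    (hB : ¬ W B) : ∃ u, u + 1 ≤ t ∧ ∃ e : Sym2 ℕ, (¬ e.IsDiag ∧ e ∉ B.colored) ∧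
      Forces W u (insert e B.1, B.2) ∧ Forces W u (B.1, insert e B.2) := by
  induction hF with
  | done h => exact absurd h hB
  | @play t B e he h₁ h₂ ih₁ ih₂ =>
    by_cases hr : e ∈ B.1
    · rw [Set.insert_eq_of_mem hr] at ih₁
      obtain ⟨u, hu, h⟩ := ih₁ hB
      exact ⟨u, by omega, h⟩
    by_cases hb : e ∈ B.2
    · rw [Set.insert_eq_of_mem hb] at ih₂
      obtain ⟨u, hu, h⟩ := ih₂ hB
      exact ⟨u, by omega, h⟩
    · exact ⟨t, le_rfl, e, ⟨he, fun h => h.elim hr hb⟩, h₁, h₂⟩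

theorem Board.exists_fresh_edge {B : Board} (hB : B.colored.Finite) :
    ∃ e : Sym2 ℕ, ¬ e.IsDiag ∧ e ∉ B.colored := by
  have hinj : Function.Injective fun i : ℕ => s(0, i + 1) := by
    intro i j hij
    simpa using hij
  obtain ⟨e, ⟨i, rfl⟩, hi⟩ := (Set.infinite_range_of_injective hinj).exists_notMem_finite hB
  exact ⟨_, by simp, hi⟩

theorem playGame_colored_finite (b : BuilderStrat) (p : PainterStrat) {B : Board}
    (hB : B.colored.Finite) (t : ℕ) : (playGame b p B t).colored.Finite := by
  induction t with
  | zero => exact hB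
  | succ t ih =>
    rw [Board.colored, Set.finite_union] at ih ⊢
    rw [playGame]
    split_ifs
    · exact ⟨ih.1.insert _, ih.2⟩
    · exact ⟨ih.1, ih.2.insert _⟩

theorem Forces.builderWinsIn {W : Board → Prop} {t : ℕ} {B : Board} (hF : Forces W t B)
    (hB : B.colored.Finite) : BuilderWinsIn B W t := by
  classical
  let good (C : Board) (e : Sym2 ℕ) : Prop :=
    (¬ e.IsDiag ∧ e ∉ C.colored) ∧
      ∀ t, Forces W t C → ∃ u, u + 1 ≤ t ∧
        Forces W u (insert e C.1, C.2) ∧ Forces W u (C.1, insert e C.2)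
  have hgood : ∀ (C : Board) (t : ℕ), Forces W t C → ¬ W C → ∃ e, good C e := by
    intro C t hC hWC
    have hex : ∃ t, Forces W t C := ⟨t, hC⟩
    obtain ⟨u, hu, e, he, h₁, h₂⟩ := (Nat.find_spec hex).exists_fresh hWC
    exact ⟨e, he, fun t ht => ⟨u, hu.trans (Nat.find_min' hex ht), h₁, h₂⟩⟩
  let b : BuilderStrat := fun C =>
    if h : ∃ e, good C e then h.choose
    else if h : ∃ e : Sym2 ℕ, ¬ e.IsDiag ∧ e ∉ C.colored then h.choose else s(0, 1)
  refine ⟨b, fun p t => ?_, fun p => ?_⟩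
  · have hfin := playGame_colored_finite b p hB t
    generalize playGame b p B t = C at hfin ⊢
    by_cases h : ∃ e, good C e
    · simp only [b, dif_pos h]
      exact h.choose_spec.1
    · have h' := Board.exists_fresh_edge hfin
      simp only [b, dif_neg h, dif_pos h']
      exact h'.choose_spec
  · by_contra! hcon
    have key : ∀ s, s ≤ t → Forces W (t - s) (playGame b p B s) := by
      intro s
      induction s with
      | zero => exact fun _ => hF
      | succ s ih =>
        intro hs
        have hs' := ih (by omega)
        have h := hgood _ _ hs' (hcon s (by omega))
        obtain ⟨u, hu, h₁, h₂⟩ := h.choose_spec.2 _ hs'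
        have hb : b (playGame b p B s) = h.choose := by simp only [b, dif_pos h]
        rw [playGame]
        rw [hb]
        split_ifs
        · exact h₁.mono_rounds (by omega)
        · exact h₂.mono_rounds (by omega)
    have h := key t le_rfl
    obtain ⟨u, hu, -⟩ := h.exists_fresh (hcon t le_rfl)
    omega

theorem HasCopy.mono {α β : Type} {H : SimpleGraph α} {G G' : SimpleGraph β} (h : HasCopy H G)
    (hG : G ≤ G') : HasCopy H G' :=
  h.imp fun _ hf x y hxy => hG (hf x y hxy)

theorem winCC_mono (k n : ℕ) (B B' : Board) (h₁ : B.1 ⊆ B'.1) (h₂ : B.2 ⊆ B'.2)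
    (h : WinCC k n B) : WinCC k n B' :=
  h.imp (fun h => HasCopy.mono h (fromEdgeSet_mono h₁))
    (fun h => HasCopy.mono h (fromEdgeSet_mono h₂))

/-- `f 0, …, f (m - 1)` is a cycle with all edges in `U`. -/
structure IsCyc (U : Set (Sym2 ℕ)) (m : ℕ) (f : ℕ → ℕ) : Prop where
  inj : ∀ i j, i < m → j < m → f i = f j → i = j
  edge : ∀ i, i + 1 < m → s(f i, f (i + 1)) ∈ U
  close : s(f (m - 1), f 0) ∈ U

theorem IsCyc.mono {U U' : Set (Sym2 ℕ)} {m : ℕ} {f : ℕ → ℕ} (h : IsCyc U m f) (hU : U ⊆ U') :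
    IsCyc U' m f :=
  ⟨h.inj, fun i hi => hU (h.edge i hi), hU h.close⟩

theorem IsCyc.hasCopy {U : Set (Sym2 ℕ)} {m : ℕ} {f : ℕ → ℕ} (h : IsCyc U m f) (hm : 2 ≤ m) :
    HasCopy (cycleGraph m) (fromEdgeSet U) := by
  have succ_mem : ∀ x y : Fin m, (y - x).val = 1 → s(f x, f y) ∈ U := by
    intro x y hxy
    have hx := x.isLt
    have hy := y.isLt
    rcases le_or_gt x y with hle | hlt
    · rw [Fin.coe_sub_iff_le.2 hle] at hxy
      have hy' : y.val = x.val + 1 := by omega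
      rw [hy']
      exact h.edge _ (by omega)
    · rw [Fin.coe_sub_iff_lt.2 hlt] at hxy
      have hx' : x.val = m - 1 := by omega
      have hy' : y.val = 0 := by omega
      rw [hx', hy']
      exact h.close
  refine ⟨⟨fun i => f i, fun i j hij => Fin.ext (h.inj _ _ i.isLt j.isLt hij)⟩, ?_⟩
  intro x y hxy
  refine (fromEdgeSet_adj _).2 ⟨?_, fun hf => hxy.ne (Fin.ext (h.inj _ _ x.isLt y.isLt hf))⟩
  rw [cycleGraph_adj'] at hxy
  rcases hxy with hxy | hxy
  · have := succ_mem y x hxy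
    rwa [Sym2.eq_swap] at this
  · exact succ_mem x y hxy


/-- A chord of length `d` shortens a cycle by `d - 1`. -/
theorem IsCyc.shortcut {U : Set (Sym2 ℕ)} {m : ℕ} {f : ℕ → ℕ} (hf : IsCyc U m f) {p d N : ℕ}
    (hd : 1 ≤ d) (hp : p + d < m) (hN : N + d = m + 1) (hU : s(f p, f (p + d)) ∈ U) :
    ∃ g, IsCyc U N g := by
  refine ⟨fun i => f (if i ≤ p then i else i + d - 1), ?_, ?_, ?_⟩
  · intro i j hi hj hij
    have := hf.inj _ _ (by split_ifs <;> omega) (by split_ifs <;> omega) hij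
    split_ifs at this <;> omega
  · intro i hi
    rcases lt_trichotomy i p with h | h | h
    · rw [if_pos (by omega), if_pos (by omega)]
      exact hf.edge _ (by omega)
    · rw [if_pos (by omega), if_neg (by omega), h, show p + 1 + d - 1 = p + d by omega]
      exact hU
    · rw [if_neg (by omega), if_neg (by omega), show i + 1 + d - 1 = i + d - 1 + 1 by omega]
      exact hf.edge _ (by omega)
  · rw [if_neg (by omega), if_pos (by omega), show N - 1 + d - 1 = m - 1 by omega]
    exact hf.close

/-- Two crossing chords, whose ends are `s` and `t` apart, shorten a cycle by `s + t - 2`. -/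
theorem IsCyc.cross {U : Set (Sym2 ℕ)} {m : ℕ} {f : ℕ → ℕ} (hf : IsCyc U m f) {p q s t N : ℕ}
    (hs : 1 ≤ s) (ht : 1 ≤ t) (hpq : p + s ≤ q) (hq : q + t < m) (hN : N + (s + t) = m + 2)
    (h₁ : s(f p, f q) ∈ U) (h₂ : s(f (p + s), f (q + t)) ∈ U) :
    ∃ g, IsCyc U N g := by
  refine ⟨fun i => f (if i ≤ p then i else if i + s ≤ q + 1 then q + p + 1 - i
    else i + s + t - 2), ?_, ?_, ?_⟩
  · intro i j hi hj hij
    have := hf.inj _ _ (by split_ifs <;> omega) (by split_ifs <;> omega) hij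
    split_ifs at this <;> omega
  · intro i hi
    rcases lt_trichotomy i p with h | h | h
    · rw [if_pos (by omega), if_pos (by omega)]
      exact hf.edge _ (by omega)
    · rw [if_pos (by omega), if_neg (by omega), if_pos (by omega), h,
        show q + p + 1 - (p + 1) = q by omega]
      exact h₁
    · rw [if_neg (show ¬ i ≤ p by omega), if_neg (show ¬ i + 1 ≤ p by omega)]
      rcases lt_trichotomy (i + s) (q + 1) with h' | h' | h'
      · rw [if_pos (by omega), if_pos (by omega), Sym2.eq_swap,
          show q + p + 1 - i = q + p + 1 - (i + 1) + 1 by omega]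
        exact hf.edge _ (by omega)
      · rw [if_pos (by omega), if_neg (by omega), show q + p + 1 - i = p + s by omega,
          show i + 1 + s + t - 2 = q + t by omega]
        exact h₂
      · rw [if_neg (by omega), if_neg (by omega),
          show i + 1 + s + t - 2 = i + s + t - 2 + 1 by omega]
        exact hf.edge _ (by omega)
  · rw [if_neg (by omega), if_neg (by omega), if_pos (by omega),
      show N - 1 + s + t - 2 = m - 1 by omega]
    exact hf.close

/-- Builder wins within `t` rounds from every board with a blue cycle of length `m`. -/
def CycWins (k n t m : ℕ) : Prop :=
  ∀ (R U : Set (Sym2 ℕ)) (f : ℕ → ℕ), IsCyc U m f → Forces (WinCC k n) t (R, U)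

theorem CycWins.mono {k n t t' m : ℕ} (h : CycWins k n t m) (ht : t ≤ t') : CycWins k n t' m :=
  fun R U f hf => (h R U f hf).mono_rounds ht

theorem cycWins_self {k n : ℕ} (hn : 2 ≤ n) (t : ℕ) : CycWins k n t n :=
  fun _ _ _ hf => .done (.inr (hf.hasCopy hn))

theorem CycWins.blue_chord {k n t m d p q : ℕ} {R U : Set (Sym2 ℕ)} {f : ℕ → ℕ}
    (hf : IsCyc U m f) (hp : p < m) (hq : q < m) (hd : 1 ≤ d) (hpq : q = p + d ∨ p = q + d)
    (hW : CycWins k n t (m + 1 - d)) :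
    Forces (WinCC k n) t (R, insert s(f p, f q) U) := by
  have hf' := hf.mono (Set.subset_insert s(f p, f q) U)
  rcases hpq with rfl | rfl
  · obtain ⟨g, hg⟩ := hf'.shortcut (N := m + 1 - d) hd hq (by omega) (Set.mem_insert _ _)
    exact hW _ _ _ hg
  · obtain ⟨g, hg⟩ := hf'.shortcut (N := m + 1 - d) hd hp (by omega)
      (by rw [Sym2.eq_swap]; exact Set.mem_insert _ _)
    exact hW _ _ _ hg

theorem Forces.force_edges {k n t : ℕ} (E : ℕ → Sym2 ℕ) (N : ℕ) {R U : Set (Sym2 ℕ)}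
    (hE : ∀ i < N, ¬ (E i).IsDiag)
    (hblue : ∀ i < N, Forces (WinCC k n) t (R, insert (E i) U))
    (hred : Forces (WinCC k n) t (R ∪ E '' Set.Iio N, U)) :
    Forces (WinCC k n) (t + N) (R, U) := by
  induction N generalizing R with
  | zero => simpa using hred
  | succ N ih =>
    refine .play (E N) (hE N (by omega)) ?_
      ((hblue N (by omega)).mono_rounds (Nat.le_add_right t N))
    refine ih (fun i hi => hE i (by omega)) (fun i hi => ?_) ?_
    · exact (hblue i (by omega)).mono (winCC_mono k n) (Set.subset_insert _ _) subset_rfl le_rfl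
    · refine hred.mono (winCC_mono k n) ?_ subset_rfl le_rfl
      rintro e (he | ⟨i, hi, rfl⟩)
      · exact .inl (.inr he)
      · rcases Nat.lt_succ_iff_lt_or_eq.1 hi with h | rfl
        · exact .inr ⟨i, h, rfl⟩
        · exact .inl (.inl rfl)

/-- Builder selects the closing edge of a cycle of length `k` first; if it becomes red, he selects
the remaining edges, each of which is harmless when blue. -/
theorem Forces.closing_edge_first {k n t T : ℕ} (hk : 3 ≤ k) {R U : Set (Sym2 ℕ)} {c : ℕ → ℕ}
    (hc : ∀ i j, i < k → j < k → c i = c j → i = j)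
    (hT : t + (k - 1) ≤ T)
    (hpath : ∀ i, i + 1 < k → Forces (WinCC k n) t (R, insert s(c i, c (i + 1)) U))
    (hclose : Forces (WinCC k n) T (R, insert s(c 0, c (k - 1)) U)) :
    Forces (WinCC k n) (T + 1) (R, U) := by
  refine .play s(c 0, c (k - 1)) ?_ ?_ hclose
  · intro h
    have := hc 0 (k - 1) (by omega) (by omega) h
    omega
  · refine Forces.mono_rounds ?_ hT
    refine Forces.force_edges (fun i => s(c i, c (i + 1))) (k - 1) ?_ ?_ ?_
    · intro i hi h
      have := hc i (i + 1) (by omega) (by omega) h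
      omega
    · intro i hi
      exact (hpath i (by omega)).mono (winCC_mono k n) (Set.subset_insert _ _) subset_rfl le_rfl
    · refine .done (.inl (IsCyc.hasCopy (f := c) ⟨hc, ?_, ?_⟩ (by omega)))
      · intro i hi
        exact .inr ⟨i, by simp only [Set.mem_Iio]; omega, rfl⟩
      · rw [Sym2.eq_swap]
        exact .inl (.inl rfl)

/-- A simple sequence of `k` positions on a cycle of length `m` whose consecutive positions are
the ends of chords which win within `t` rounds when blue. -/
structure ChordPath (k n t m : ℕ) (v : ℕ → ℕ) : Prop where
  inj : ∀ i j, i < k → j < k → v i = v j → i = j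
  lt : ∀ i, i < k → v i < m
  step : ∀ i, i + 1 < k → ∃ d, 1 ≤ d ∧ (v (i + 1) = v i + d ∨ v i = v (i + 1) + d) ∧
    CycWins k n t (m + 1 - d)

theorem ChordPath.forces {k n t T m : ℕ} {v : ℕ → ℕ} (hv : ChordPath k n t m v) (hk : 3 ≤ k)
    {R U : Set (Sym2 ℕ)} {f : ℕ → ℕ} (hf : IsCyc U m f) (hT : t + (k - 1) ≤ T)
    (hclose : Forces (WinCC k n) T (R, insert s(f (v 0), f (v (k - 1))) U)) :
    Forces (WinCC k n) (T + 1) (R, U) := by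
  refine Forces.closing_edge_first hk (c := fun i => f (v i)) (t := t) ?_ hT ?_ hclose
  · intro i j hi hj hij
    exact hv.inj _ _ hi hj (hf.inj _ _ (hv.lt _ hi) (hv.lt _ hj) hij)
  · intro i hi
    obtain ⟨d, hd, hvd, hW⟩ := hv.step i hi
    exact CycWins.blue_chord hf (hv.lt _ (by omega)) (hv.lt _ hi) hd hvd hW

theorem ChordPath.add {k n t m : ℕ} {v : ℕ → ℕ} (hv : ChordPath k n t m v) {a : ℕ}
    (ha : ∀ i, i < k → v i + a < m) : ChordPath k n t m fun i => v i + a where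
  inj i j hi hj hij := hv.inj i j hi hj (by simpa using hij)
  lt := ha
  step i hi := by
    obtain ⟨d, hd, hvd, hW⟩ := hv.step i hi
    exact ⟨d, hd, by omega, hW⟩

/-- Shortening a blue cycle of length `n + 1` to `n`. -/
theorem cycWins_add_one {k n : ℕ} (hk : 3 ≤ k) (hn : 3 * k - 3 < n) :
    CycWins k n (k + 2) (n + 1) := by
  intro R U f hf
  have h0 : CycWins k n 0 n := cycWins_self (by omega) 0
  have hpath : ∀ a, a + k ≤ n → a < k → ChordPath k n 0 (n + 1) fun i => 2 * i + a := by
    intro a ha hak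
    refine ⟨fun i j hi hj hij => by omega,
      fun i hi => by omega, fun i hi => ⟨2, by omega, .inl (by ring), h0⟩⟩
  refine (hpath 0 (by omega) (by omega)).forces hk hf (T := k + 1) (by omega) ?_
  have hf₁ := hf.mono (Set.subset_insert s(f (2 * 0 + 0), f (2 * (k - 1) + 0)) U)
  refine (hpath (k - 2) (by omega) (by omega)).forces hk hf₁ (T := k) (by omega) ?_
  have hf₂ := hf₁.mono (Set.subset_insert s(f (2 * 0 + (k - 2)), f (2 * (k - 1) + (k - 2))) _)
  set U₂ := insert s(f (2 * 0 + (k - 2)), f (2 * (k - 1) + (k - 2)))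
    (insert s(f (2 * 0 + 0), f (2 * (k - 1) + 0)) U) with hU₂
  have hb₁ : s(f 0, f (2 * k - 2)) ∈ U₂ := by
    rw [hU₂, show 2 * (k - 1) + 0 = 2 * k - 2 by omega]
    exact .inr (.inl rfl)
  have hb₂ : s(f (k - 2), f (3 * k - 4)) ∈ U₂ := by
    rw [hU₂, show 2 * (k - 1) + (k - 2) = 3 * k - 4 by omega, show 2 * 0 + (k - 2) = k - 2 by omega]
    exact .inl rfl
  have hcross : ∀ p q s t x y, 1 ≤ s → s + t = 3 → 1 ≤ t → p + s = x → q + t = y → x ≤ q → y ≤ n →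
      s(f p, f q) ∈ U₂ → Forces (WinCC k n) 0 (R, insert s(f x, f y) U₂) := by
    rintro p q s t x y hs hst ht rfl rfl hxq hy hpq
    obtain ⟨g, hg⟩ := (hf₂.mono (Set.subset_insert s(f (p + s), f (q + t)) U₂)).cross
      hs ht hxq (by omega) (N := n) (by omega) (.inr hpq) (.inl rfl)
    exact h0 _ _ _ hg
  obtain ⟨T, rfl⟩ : ∃ T, k = T + 1 := ⟨k - 1, by omega⟩
  let v : ℕ → ℕ := fun i => if 2 * i < T + 1 then T + 1 - 2 * i else T + 2 * i
  refine Forces.closing_edge_first hk (c := fun i => f (v i)) (t := 0) ?_ (by omega) ?_ ?_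
  · intro i j hi hj hij
    have := hf.inj _ _ (by simp only [v]; split_ifs <;> omega)
      (by simp only [v]; split_ifs <;> omega) hij
    simp only [v] at this
    split_ifs at this <;> omega
  · intro i hi
    by_cases hi₁ : 2 * (i + 1) < T + 1
    · refine CycWins.blue_chord hf₂ (d := 2) ?_ ?_ (by omega) (.inr ?_) h0 <;>
        simp only [v] <;> split_ifs <;> omega
    by_cases hi₂ : 2 * i < T + 1
    · rcases Nat.even_or_odd' T with ⟨r, rfl | rfl⟩
      · refine hcross 0 (2 * (2 * r + 1) - 2) 1 2 _ _ ?_ ?_ ?_ ?_ ?_ ?_ ?_ hb₁ <;>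
          (try simp only [v]) <;> (try split_ifs) <;> omega
      · refine hcross 0 (2 * (2 * r + 1 + 1) - 2) 2 1 _ _ ?_ ?_ ?_ ?_ ?_ ?_ ?_ hb₁ <;>
          (try simp only [v]) <;> (try split_ifs) <;> omega
    · refine CycWins.blue_chord hf₂ (d := 2) ?_ ?_ (by omega) (.inl ?_) h0 <;>
        simp only [v] <;> split_ifs <;> omega
  · refine Forces.mono_rounds (t := 0) ?_ (Nat.zero_le _)
    refine hcross (T + 1 - 2) (3 * (T + 1) - 4) 2 1 _ _ ?_ ?_ ?_ ?_ ?_ ?_ ?_ hb₂ <;>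
      (try simp only [v]) <;> (try split_ifs) <;> omega

/-- A sequence of distinct naturals with consecutive differences `h` and `h + 1`: it zigzags through
the blocks `[q (3h + 2), q (3h + 2) + 2h + 1]`. -/
def zigzag (h j : ℕ) : ℕ :=
  j / (2 * h + 2) * (3 * h + 2) +
    if j % (2 * h + 2) % 2 = 0 then j % (2 * h + 2) / 2 else h + 1 + j % (2 * h + 2) / 2

theorem zigzag_injective (h : ℕ) : Function.Injective (zigzag h) := by
  intro i j hij
  have hi := Nat.mod_lt i (show 2 * h + 2 > 0 by omega)
  have hj := Nat.mod_lt j (show 2 * h + 2 > 0 by omega)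
  have hi' := Nat.div_add_mod i (2 * h + 2)
  have hj' := Nat.div_add_mod j (2 * h + 2)
  unfold zigzag at hij
  generalize i % (2 * h + 2) = r at *
  generalize j % (2 * h + 2) = r' at *
  generalize i / (2 * h + 2) = q at *
  generalize j / (2 * h + 2) = q' at *
  have hz : (if r % 2 = 0 then r / 2 else h + 1 + r / 2) < 3 * h + 2 := by split_ifs <;> omega
  have hz' : (if r' % 2 = 0 then r' / 2 else h + 1 + r' / 2) < 3 * h + 2 := by
    split_ifs <;> omega
  have hq : q = q' := by
    rcases lt_trichotomy q q' with hlt | heq | hlt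
    · have := Nat.mul_le_mul_right (3 * h + 2) (Nat.succ_le_of_lt hlt)
      rw [Nat.succ_mul] at this
      omega
    · exact heq
    · have := Nat.mul_le_mul_right (3 * h + 2) (Nat.succ_le_of_lt hlt)
      rw [Nat.succ_mul] at this
      omega
  subst hq
  have hr : r = r' := by split_ifs at hij <;> omega
  omega

theorem zigzag_succ (h j : ℕ) :
    zigzag h (j + 1) = zigzag h j + (h + 1) ∨ zigzag h j = zigzag h (j + 1) + h := by
  have hj := Nat.mod_lt j (show 2 * h + 2 > 0 by omega)
  have hj' := Nat.div_add_mod j (2 * h + 2)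
  unfold zigzag
  generalize j % (2 * h + 2) = r at *
  generalize j / (2 * h + 2) = q at *
  subst hj'
  by_cases hr : r + 1 < 2 * h + 2
  · rw [add_assoc, Nat.mul_add_div (by omega), Nat.mul_add_mod, Nat.div_eq_of_lt hr,
      Nat.mod_eq_of_lt hr, add_zero]
    split_ifs <;> omega
  · rw [show (2 * h + 2) * q + r + 1 = (2 * h + 2) * (q + 1) by rw [mul_add]; omega,
      Nat.mul_div_cancel_left _ (by omega), Nat.mul_mod_right, add_mul]
    split_ifs <;> omega

theorem zigzag_le (h j : ℕ) :
    zigzag h j ≤ h + 1 + j / 2 + j / (2 * h + 2) * (2 * h + 1) := by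
  have hj' := Nat.div_add_mod j (2 * h + 2)
  unfold zigzag
  generalize j % (2 * h + 2) = r at *
  generalize j / (2 * h + 2) = q at *
  have h₁ : q * (3 * h + 2) = 3 * (q * h) + 2 * q := by ring
  have h₂ : q * (2 * h + 1) = 2 * (q * h) + q := by ring
  have h₃ : (2 * h + 2) * q = 2 * (q * h) + 2 * q := by ring
  split_ifs <;> omega

/-- Shortening a blue cycle of length `n + h` for small `h`. -/
theorem cycWins_add_of_le {k n h : ℕ} (hk : 3 ≤ k) (hn : 3 * k - 3 < n) (hh : 3 * h ≤ n + 2) :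
    CycWins k n (2 * k + 3) (n + h) := by
  have h1 : CycWins k n (k + 2) (n + 1) := cycWins_add_one hk hn
  have h0 : CycWins k n (k + 2) n := cycWins_self (by omega) _
  rcases Nat.lt_or_ge h 2 with h2 | h2
  · interval_cases h
    · exact h0.mono (by omega)
    · exact h1.mono (by omega)
  have hbound : ∀ j, j + 2 ≤ k → h + zigzag h j + (h / 2 + 1) < n + h := by
    intro j hj
    have hz := zigzag_le h j
    have hj' := Nat.div_mul_le_self j (2 * h + 2)
    rcases Nat.eq_zero_or_pos (j / (2 * h + 2)) with hq | hq
    · rw [hq] at hz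
      omega
    · generalize j / (2 * h + 2) = q at *
      have h₂ : q * (2 * h + 1) = 2 * (q * h) + q := by ring
      have h₃ : q * (2 * h + 2) = 2 * (q * h) + 2 * q := by ring
      have h₄ : h ≤ q * h := Nat.le_mul_of_pos_left h hq
      omega
  let v : ℕ → ℕ := fun i => if i = 0 then 0 else h + zigzag h (i - 1)
  have hlt : ∀ i, i < k → v i + (h / 2 + 1) < n + h := by
    intro i hi
    simp only [v]
    split_ifs
    · omega
    · exact hbound _ (by omega)
  have hv : ChordPath k n (k + 2) (n + h) v := by
    refine ⟨fun i j hi hj hij => ?_, fun i hi => by have := hlt i hi; omega, fun i hi => ?_⟩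
    · simp only [v] at hij
      split_ifs at hij with hi₀ hj₀ hj₀
      · omega
      · omega
      · omega
      · have := zigzag_injective h (Nat.add_left_cancel hij)
        omega
    · rcases Nat.eq_zero_or_pos i with rfl | hi₀
      · refine ⟨h, by omega, .inl (by simp [v, zigzag]), ?_⟩
        rwa [show n + h + 1 - h = n + 1 by omega]
      · obtain ⟨j, rfl⟩ : ∃ j, i = j + 1 := ⟨i - 1, by omega⟩
        simp only [v, Nat.succ_ne_zero, if_false, Nat.add_sub_cancel]
        rcases zigzag_succ h j with hj | hj
        · refine ⟨h + 1, by omega, .inl (by omega), ?_⟩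
          rwa [show n + h + 1 - (h + 1) = n by omega]
        · refine ⟨h, by omega, .inr (by omega), ?_⟩
          rwa [show n + h + 1 - h = n + 1 by omega]
  have hlast : h / 2 + 1 ≤ v (k - 1) := by
    simp only [v]
    rw [if_neg (by omega)]
    omega
  intro R U f hf
  refine hv.forces hk hf (T := 2 * k + 2) (by omega) ?_
  have hf₁ := hf.mono (Set.subset_insert s(f (v 0), f (v (k - 1))) U)
  refine (hv.add hlt).forces hk hf₁ (T := 2 * k + 1) (by omega) ?_
  obtain ⟨g, hg⟩ := (hf₁.mono (Set.subset_insert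
    s(f (v 0 + (h / 2 + 1)), f (v (k - 1) + (h / 2 + 1))) _)).cross
    (p := v 0) (q := v (k - 1)) (s := h / 2 + 1) (t := h / 2 + 1) (N := n + h - 2 * (h / 2))
    (by omega) (by omega) (by simpa [v] using hlast) (hlt _ (by omega)) (by omega)
    (.inr (.inl rfl)) (.inl rfl)
  rcases Nat.even_or_odd' h with ⟨r, hr | hr⟩
  · rw [show n + h - 2 * (h / 2) = n by omega] at hg
    exact (h0 _ _ _ hg).mono_rounds (by omega)
  · rw [show n + h - 2 * (h / 2) = n + 1 by omega] at hg
    exact (h1 _ _ _ hg).mono_rounds (by omega)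

/-- Shortening a blue cycle of length `n + h`: every extra round reduces `h` by almost `n / 3`. -/
theorem cycWins_add {k n : ℕ} (hk : 3 ≤ k) (hn : 3 * k - 3 < n) (j : ℕ) :
    ∀ h, h ≤ (n + 2) / 3 + j * ((n + 2) / 3 - 1) →
      CycWins k n (j + (k - 1) + (2 * k + 3)) (n + h) := by
  have hsmall : ∀ h, h ≤ (n + 2) / 3 → CycWins k n (2 * k + 3) (n + h) :=
    fun h hh => cycWins_add_of_le hk hn (by omega)
  obtain ⟨w, hw⟩ : ∃ w, w = (n + 2) / 3 := ⟨_, rfl⟩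
  rw [← hw] at hsmall ⊢
  induction j with
  | zero => exact fun h hh => (hsmall h (by omega)).mono (by omega)
  | succ j ih =>
    intro h hh
    by_cases hhw : h ≤ w
    · exact (hsmall h hhw).mono (by omega)
    rw [add_mul, one_mul] at hh
    let v : ℕ → ℕ := fun i =>
      if i = k - 1 then (if k % 2 = 0 then h else w) else if i % 2 = 0 then i / 2 else h + 1 + i / 2
    have hv : ChordPath k n (2 * k + 3) (n + h) v := by
      refine ⟨fun i j hi hj hij => ?_, fun i hi => ?_, fun i hi => ?_⟩
      · simp only [v] at hij
        split_ifs at hij <;> omega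
      · simp only [v]
        split_ifs <;> omega
      · have key : ∀ d, h + 1 ≤ d + w → d ≤ h + 1 →
            CycWins k n (2 * k + 3) (n + h + 1 - d) := by
          intro d hd hd'
          rw [show n + h + 1 - d = n + (h + 1 - d) by omega]
          exact hsmall _ (by omega)
        refine ⟨v (i + 1) - v i + (v i - v (i + 1)), ?_, ?_, key _ ?_ ?_⟩ <;> simp only [v] <;>
          split_ifs <;> omega
    intro R U f hf
    rw [show j + 1 + (k - 1) + (2 * k + 3) = j + (k - 1) + (2 * k + 3) + 1 by omega]
    refine hv.forces hk hf (by omega) ?_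
    have hv0 : v 0 = 0 := by simp only [v]; rw [if_neg (by omega)]; rfl
    refine CycWins.blue_chord hf (d := v (k - 1)) (hv.lt _ (by omega)) (hv.lt _ (by omega)) ?_
      (.inl (by omega)) ?_
    · simp only [v, if_true]
      split_ifs <;> omega
    · simp only [v, if_true]
      split_ifs
      · rw [show n + h + 1 - h = n + 1 by omega]
        exact ih 1 (by omega)
      · rw [show n + h + 1 - w = n + (h - (w - 1)) by omega]
        exact ih _ (by omega)

theorem isCyc_blueCycleBoard {m : ℕ} (hm : 2 ≤ m) : IsCyc (blueCycleBoard m).2 m id where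
  inj _ _ _ _ h := h
  edge i hi := ⟨i, by omega, by rw [Nat.mod_eq_of_lt hi]; rfl⟩
  close := ⟨m - 1, by omega, by rw [Nat.sub_add_cancel (by omega), Nat.mod_self]; rfl⟩

theorem blueCycleBoard_colored_finite (m : ℕ) : (blueCycleBoard m).colored.Finite := by
  refine Set.finite_empty.union
    (((Set.finite_Iio m).image fun i => s(i, (i + 1) % m)).subset ?_)
  rintro e ⟨i, hi, rfl⟩
  exact ⟨i, hi, rfl⟩

/-- Shortening arbitrary blue cycles: if `n > 3k - 3`, `0 ≤ h ≤ 2n` and the board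
contains a blue cycle of length `n + h`, then `r̃_H(C_k, C_n) ≤ 3k + 10`. -/
theorem shorten_blue_cycle (k n h : ℕ) (hk : 3 ≤ k) (hn : 3 * k - 3 < n)
    (hh : h ≤ 2 * n) :
    BuilderWinsIn (blueCycleBoard (n + h)) (WinCC k n) (3 * k + 10) := by
  have hW := cycWins_add hk hn 8 h (by omega) (blueCycleBoard (n + h)).1 _ _
    (isCyc_blueCycleBoard (by omega))
  exact Forces.builderWinsIn (hW.mono_rounds (by omega)) (blueCycleBoard_colored_finite _)
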